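/- Let (A, B, χ, c, δ) and (U, V, χ_U, c_U, δ_V) be 3-periodic exact sequences of abelian groups, and let μ_A : A → U and μ_B : B → V be group homomorphisms making the diagram commute, i.e. μ_A ∘ χ = χ_U ∘ μ_A, μ_B ∘ c = c_U ∘ μ_A, and μ_A ∘ δ = δ_V ∘ μ_B. Assume that χ and χ_U are nilpotent, i.e. there exists N ∈ ℕ such that the N-fold composites χ^N = 0 and χ_U^N = 0. Then μ_B is a group isomorphism if and only if μ_A is a group isomorphism. -/

import Mathlib

/-- Given two 3-periodic exact sequences of abelian groups
`(A, B, χ, c, δ)` and `(U, V, χ_U, c_U, δ_V)`, and homomorphisms `μ_A : A → U`,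
`μ_B : B → V` making the diagram commute, if `χ` and `χ_U` are nilpotent
(their `N`-fold iterates vanish for some `N`), then `μ_B` is an isomorphism
if and only if `μ_A` is an isomorphism. -/
theorem muB_iso_iff_muA_iso
    {A B U V : Type*} [AddCommGroup A] [AddCommGroup B]
    [AddCommGroup U] [AddCommGroup V]
    (χ : A →+ A) (c : A →+ B) (δ : B →+ A)
    (χU : U →+ U) (cU : U →+ V) (δV : V →+ U)
    -- exactness of the first 3-periodic sequence
    (hker_c : ∀ a : A, c a = 0 ↔ ∃ x : A, χ x = a)
    (hker_δ : ∀ b : B, δ b = 0 ↔ ∃ a : A, c a = b)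
    (hker_χ : ∀ a : A, χ a = 0 ↔ ∃ b : B, δ b = a)
    -- exactness of the second 3-periodic sequence
    (hker_cU : ∀ u : U, cU u = 0 ↔ ∃ x : U, χU x = u)
    (hker_δV : ∀ v : V, δV v = 0 ↔ ∃ u : U, cU u = v)
    (hker_χU : ∀ u : U, χU u = 0 ↔ ∃ v : V, δV v = u)
    -- the comparison homomorphisms and the commutativity of the diagram
    (μA : A →+ U) (μB : B →+ V)
    (hcomm₁ : ∀ a : A, μA (χ a) = χU (μA a))
    (hcomm₂ : ∀ a : A, μB (c a) = cU (μA a))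
    (hcomm₃ : ∀ b : B, μA (δ b) = δV (μB b))
    -- nilpotency of χ and χ_U
    (N : ℕ) (hχN : ∀ a : A, (⇑χ)^[N] a = 0) (hχUN : ∀ u : U, (⇑χU)^[N] u = 0) :
    Function.Bijective μB ↔ Function.Bijective μA := by
  constructor
  · rintro ⟨hi, hs⟩
    have lift0 : ∀ u : U, χU u = 0 → ∃ b : B, μA (δ b) = u := by
      intro u hu
      obtain ⟨v, rfl⟩ := (hker_χU u).1 hu
      obtain ⟨b, rfl⟩ := hs v
      exact ⟨b, hcomm₃ b⟩
    have χδ : ∀ b : B, χ (δ b) = 0 := fun b => (hker_χ _).2 ⟨b, rfl⟩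
    constructor
    · rw [injective_iff_map_eq_zero]
      have step : ∀ a : A, μA a = 0 → ∃ x : A, μA x = 0 ∧ χ x = a := by
        intro a ha
        have hc : c a = 0 := by
          apply hi
          rw [hcomm₂, ha, map_zero, map_zero]
        obtain ⟨x, rfl⟩ := (hker_c a).1 hc
        obtain ⟨b, hb⟩ := lift0 (μA x) (by rw [← hcomm₁, ha])
        exact ⟨x - δ b, by rw [map_sub, hb, sub_self], by rw [map_sub, χδ, sub_zero]⟩
      have iter : ∀ n : ℕ, ∀ a : A, μA a = 0 → ∃ x : A, (⇑χ)^[n] x = a := by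
        intro n
        induction n with
        | zero => exact fun a _ => ⟨a, rfl⟩
        | succ n ih =>
          intro a ha
          obtain ⟨y, hy, rfl⟩ := step a ha
          obtain ⟨x, rfl⟩ := ih y hy
          exact ⟨x, Function.iterate_succ_apply' _ _ _⟩
      intro a ha
      obtain ⟨x, rfl⟩ := iter N a ha
      exact hχN x
    · have step : ∀ u : U, (∃ a, μA a = χU u) → ∃ a, μA a = u := by
        rintro u ⟨a, ha⟩
        have hc : c a = 0 := by
          apply hi
          rw [hcomm₂, ha, map_zero]
          exact (hker_cU _).2 ⟨u, rfl⟩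
        obtain ⟨x, rfl⟩ := (hker_c a).1 hc
        obtain ⟨b, hb⟩ := lift0 (u - μA x) (by rw [map_sub, ← hcomm₁, ha, sub_self])
        exact ⟨δ b + x, by rw [map_add, hb, sub_add_cancel]⟩
      have iter : ∀ n : ℕ, ∀ u : U, (∃ a, μA a = (⇑χU)^[n] u) → ∃ a, μA a = u := by
        intro n
        induction n with
        | zero => exact fun u h => h
        | succ n ih =>
          intro u h
          exact step u (ih (χU u) h)
      intro u
      exact iter N u ⟨0, by rw [hχUN, map_zero]⟩
  · rintro ⟨hi, hs⟩
    constructor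
    · rw [injective_iff_map_eq_zero]
      intro b hb
      have hδ : δ b = 0 := by
        apply hi
        rw [hcomm₃, hb, map_zero, map_zero]
      obtain ⟨a, rfl⟩ := (hker_δ b).1 hδ
      rw [hcomm₂] at hb
      obtain ⟨u, hu⟩ := (hker_cU _).1 hb
      obtain ⟨x, rfl⟩ := hs u
      rw [← hcomm₁] at hu
      exact (hker_c a).2 ⟨x, hi hu⟩
    · intro v
      obtain ⟨a, ha⟩ := hs (δV v)
      have hχ : χ a = 0 := by
        apply hi
        rw [hcomm₁, ha, map_zero]
        exact (hker_χU _).2 ⟨v, rfl⟩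
      obtain ⟨b, rfl⟩ := (hker_χ a).1 hχ
      rw [hcomm₃] at ha
      obtain ⟨u, hu⟩ := (hker_δV (v - μB b)).1 (by rw [map_sub, ha, sub_self])
      obtain ⟨x, rfl⟩ := hs u
      exact ⟨c x + b, by rw [map_add, hcomm₂, hu, sub_add_cancel]⟩
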